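/- Let n ≥ 1 and let C be an additive subgroup of (Z_4)^n of cardinality 4^{k_1}·2^{k_2} such that every nonzero element of C has Lee weight at least d, where d ≥ 3. Then there exists a (d−2)-distance coloring of V_{2n−1} with 2^{2n − 1 − 2k_1 − k_2} colors; in particular χ'_{d−2}(2n−1) ≤ 2^{2n − 1 − 2k_1 − k_2}. -/

import Mathlib

/-!
The Gray map carries the Lee metric on `G = (ZMod 4)^n` to the Hamming metric on `V (2n)`, so the
cosets of `C` cut `V (2n)` into `4^n / |C|` codes of minimum distance at least `d`. A word `x` of
length `2n - 1` has two extensions to length `2n`, whose inverse Gray images (`grayInv x 0` and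
`grayInv x 1`) differ by plus or minus the last unit vector `e` (`grayInv_one`).

Since `e` and `2e` have Lee weights `1` and `2`, both less than `d`, the image of `e` in `G ⧸ C` has
order exactly `4`. Its cycles are therefore even, so one half `S` of `G ⧸ C` can be chosen that
translation by `e` exchanges with its complement (`exists_alternating_set`). Every `x` then has
exactly one extension whose coset lies in `S`, and that coset is the color of `x`. There are
`|G ⧸ C| / 2` colors. Distinct words of the same color have extensions at distance at least `d`,
and are thus themselves at distance at least `d - 1` (`leeWtVec_grayInv_sub_le`).
-/

/-- `V n` is the set of binary words of length `n`. -/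
abbrev V (n : ℕ) := Fin n → ZMod 2

/-- A `d`-distance coloring of `V n` with `L` colors. -/
def IsDistColoring (n d L : ℕ) (Γ : V n → Fin L) : Prop :=
  ∀ u v : V n, u ≠ v → hammingDist u v ≤ d → Γ u ≠ Γ v

/-- `chi' d n` is the minimum number of colors of a `d`-distance coloring of `V n`. -/
noncomputable def chi' (d n : ℕ) : ℕ :=
  sInf {L : ℕ | ∃ Γ : V n → Fin L, IsDistColoring n d L Γ}

/-- An exactly `d`-distance coloring of `V n` with `L` colors. -/
def IsExactColoring (n d L : ℕ) (Γ : V n → Fin L) : Prop :=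
  ∀ u v : V n, hammingDist u v = d → Γ u ≠ Γ v

/-- `chi d n` is the minimum number of colors of an exactly `d`-distance coloring of `V n`. -/
noncomputable def chi (d n : ℕ) : ℕ :=
  sInf {L : ℕ | ∃ Γ : V n → Fin L, IsExactColoring n d L Γ}

/-- `kdist n d` is the maximum dimension of a linear subspace of `V n` in which
every nonzero element has Hamming weight at least `d`. -/
noncomputable def kdist (n d : ℕ) : ℕ :=
  sSup {k : ℕ | ∃ C : Submodule (ZMod 2) (V n),
    Module.finrank (ZMod 2) C = k ∧ ∀ c ∈ C, c ≠ 0 → d ≤ hammingNorm c}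

/-- `kbar n d` is the maximum dimension of a linear subspace of `V n` in which
no nonzero element has Hamming weight exactly `d`. -/
noncomputable def kbar (n d : ℕ) : ℕ :=
  sSup {k : ℕ | ∃ C : Submodule (ZMod 2) (V n),
    Module.finrank (ZMod 2) C = k ∧ ∀ c ∈ C, c ≠ 0 → hammingNorm c ≠ d}

/-- `Acode n d` is the maximum size of a binary code of length `n` and minimum distance ≥ `d`. -/
noncomputable def Acode (n d : ℕ) : ℕ :=
  sSup {m : ℕ | ∃ C : Finset (V n), C.card = m ∧
    ∀ a ∈ C, ∀ b ∈ C, a ≠ b → d ≤ hammingDist a b}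

/-- `Qcode n d` is the maximum size of a binary `(n, {d̄})` forbidden distance code. -/
noncomputable def Qcode (n d : ℕ) : ℕ :=
  sSup {m : ℕ | ∃ C : Finset (V n), C.card = m ∧
    ∀ a ∈ C, ∀ b ∈ C, a ≠ b → hammingDist a b ≠ d}

/-- The Lee weight on `ZMod 4`: 0 ↦ 0, 1 ↦ 1, 2 ↦ 2, 3 ↦ 1. -/
def leeWt (x : ZMod 4) : ℕ := min x.val (4 - x.val)

/-- The Lee weight of a vector in `(ZMod 4)^n`. -/
def leeWtVec {n : ℕ} (x : Fin n → ZMod 4) : ℕ := ∑ i, leeWt (x i)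

/-- The Lee distance on `(ZMod 4)^n`. -/
def leeDist {n : ℕ} (x y : Fin n → ZMod 4) : ℕ := leeWtVec (x - y)

/-- The Gray map `ZMod 4 → (ZMod 2)^2`: 0 ↦ 00, 1 ↦ 01, 2 ↦ 11, 3 ↦ 10. -/
def gray (x : ZMod 4) : Fin 2 → ZMod 2 :=
  ![if 2 ≤ x.val then 1 else 0, if x.val = 1 ∨ x.val = 2 then 1 else 0]

/-- The Gray map extended coordinatewise to `(ZMod 4)^n → (ZMod 2)^{2n}`. -/
def grayMap {n : ℕ} (x : Fin n → ZMod 4) : V (2 * n) :=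
  fun j => gray (x ⟨j.val / 2, by have := j.isLt; omega⟩) ⟨j.val % 2, by omega⟩

/-- Inverse of the Gray map on one coordinate: `00 ↦ 0`, `01 ↦ 1`, `11 ↦ 2`, `10 ↦ 3`. -/
def grayBitsInv (a b : ZMod 2) : ZMod 4 :=
  if a = 0 then (if b = 0 then 0 else 1) else (if b = 0 then 3 else 2)

/-- The word `x` of length `N`, continued by the constant bit `b` to a sequence indexed by `ℕ`. -/
def extendBit {N : ℕ} (x : V N) (b : ZMod 2) (j : ℕ) : ZMod 2 :=
  if h : j < N then x ⟨j, h⟩ else b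

/-- Inverse Gray image of the word of length `2n` obtained by appending the bit `b` to `x`. -/
def grayInv {n : ℕ} (x : V (2 * n - 1)) (b : ZMod 2) : Fin n → ZMod 4 :=
  fun i => grayBitsInv (extendBit x b (2 * i)) (extendBit x b (2 * i + 1))

lemma leeWt_grayBitsInv_sub (a b a' b' : ZMod 2) :
    leeWt (grayBitsInv a b - grayBitsInv a' b') =
      (if a ≠ a' then 1 else 0) + (if b ≠ b' then 1 else 0) := by
  revert a b a' b'; decide

lemma sum_range_pairs (f : ℕ → ℕ) (n : ℕ) :
    ∑ i ∈ Finset.range n, (f (2 * i) + f (2 * i + 1)) = ∑ j ∈ Finset.range (2 * n), f j := by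
  induction n with
  | zero => simp
  | succ n ih =>
    rw [Finset.sum_range_succ, ih, Nat.mul_succ, Finset.sum_range_succ, Finset.sum_range_succ]
    ring

/-- The inverse Gray map is an isometry, split into the contribution of the first `2n - 1` bits
and that of the appended bit. -/
lemma leeWtVec_grayInv_sub {n : ℕ} (hn : 1 ≤ n) (u v : V (2 * n - 1)) (b c : ZMod 2) :
    leeWtVec (grayInv u b - grayInv v c) = hammingDist u v + (if b ≠ c then 1 else 0) := by
  let f : ℕ → ℕ := fun j => if extendBit u b j ≠ extendBit v c j then 1 else 0
  have h1 : leeWtVec (grayInv u b - grayInv v c) = ∑ j ∈ Finset.range (2 * n), f j := by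
    rw [← sum_range_pairs, ← Fin.sum_univ_eq_sum_range (fun i => f (2 * i) + f (2 * i + 1))]
    exact Finset.sum_congr rfl fun i _ => leeWt_grayBitsInv_sub _ _ _ _
  have h2 : hammingDist u v = ∑ j ∈ Finset.range (2 * n - 1), f j := by
    rw [← Fin.sum_univ_eq_sum_range, hammingDist, Finset.card_filter]
    refine Finset.sum_congr rfl fun j _ => ?_
    simp [f, extendBit]
  have h3 : f (2 * n - 1) = if b ≠ c then 1 else 0 := by
    simp [f, extendBit]
  rw [h1, h2, ← h3, ← Finset.sum_range_succ, show 2 * n - 1 + 1 = 2 * n by omega]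

lemma leeWtVec_grayInv_sub_le {n : ℕ} (hn : 1 ≤ n) (u v : V (2 * n - 1)) (b c : ZMod 2) :
    leeWtVec (grayInv u b - grayInv v c) ≤ hammingDist u v + 1 := by
  rw [leeWtVec_grayInv_sub hn]
  split_ifs <;> omega

lemma grayInv_one {n : ℕ} (hn : 1 ≤ n) (x : V (2 * n - 1)) :
    grayInv x 1 = grayInv x 0 + Pi.single ⟨n - 1, by omega⟩ 1 ∨
      grayInv x 0 = grayInv x 1 + Pi.single ⟨n - 1, by omega⟩ 1 := by
  have hbit : ∀ a : ZMod 2, a = 0 ∨ a = 1 := by decide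
  have hoff : ∀ i : Fin n, i ≠ ⟨n - 1, by omega⟩ → grayInv x 1 i = grayInv x 0 i := by
    intro i hi
    have hlt : (i : ℕ) ≠ n - 1 := fun h => hi (Fin.ext h)
    have h1 : 2 * (i : ℕ) < 2 * n - 1 := by omega
    have h2 : 2 * (i : ℕ) + 1 < 2 * n - 1 := by omega
    simp [grayInv, extendBit, h1, h2]
  have hlast : ∀ b, grayInv x b ⟨n - 1, by omega⟩ =
      grayBitsInv (x ⟨2 * (n - 1), by omega⟩) b := by
    intro b
    have h1 : 2 * (n - 1) < 2 * n - 1 := by omega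
    have h2 : ¬ 2 * (n - 1) + 1 < 2 * n - 1 := by omega
    simp [grayInv, extendBit, h1, h2]
  -- The last bit moves `0 → 1` when the bit before it is `0`, and `3 → 2` when that bit is `1`.
  rcases hbit (x ⟨2 * (n - 1), by omega⟩) with h | h
  · left
    ext i
    by_cases hi : i = ⟨n - 1, by omega⟩
    · subst hi
      simp only [Pi.add_apply, Pi.single_eq_same, hlast, h]
      decide
    · simp [hoff i hi, hi]
  · right
    ext i
    by_cases hi : i = ⟨n - 1, by omega⟩
    · subst hi
      simp only [Pi.add_apply, Pi.single_eq_same, hlast, h]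
      decide
    · simp [hoff i hi, hi]

lemma leeWtVec_single {n : ℕ} (i : Fin n) (a : ZMod 4) :
    leeWtVec (Pi.single i a : Fin n → ZMod 4) = leeWt a := by
  rw [leeWtVec, Finset.sum_eq_single i]
  · simp
  · intro j _ hj
    simp [hj, leeWt]
  · simp

/-- Translation by an element of order `4` has only cycles of length `4`, so the group splits into
two halves which the translation exchanges. -/
lemma exists_alternating_set {Q : Type*} [AddCommGroup Q] (e : Q) (h1 : e ≠ 0)
    (h2 : e + e ≠ 0) (h4 : e + e + (e + e) = 0) :
    ∃ S : Set Q, ∀ a, a + e ∈ S ↔ a ∉ S := by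
  let H := AddSubgroup.zmultiples e
  -- On each coset of `⟨e⟩`, keep the even multiples of `e` counted from a chosen base point.
  let r : Q → Q := fun a => (QuotientAddGroup.mk a : Q ⧸ H).out
  have hr : ∀ a, r (a + e) = r a := by
    intro a
    have : (QuotientAddGroup.mk (a + e) : Q ⧸ H) = QuotientAddGroup.mk a := by
      rw [QuotientAddGroup.eq]
      simp [H]
    simp only [r, this]
  have hmem : ∀ a, a - r a ∈ H := by
    intro a
    have h : (QuotientAddGroup.mk (r a) : Q ⧸ H) = QuotientAddGroup.mk a := Quotient.out_eq _
    rw [QuotientAddGroup.eq] at h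
    rwa [sub_eq_add_neg, add_comm]
  have hcases : ∀ z ∈ H, z = 0 ∨ z = e ∨ z = e + e ∨ z = e + e + e := by
    rintro z ⟨k, rfl⟩
    have h4' : (4 : ℤ) • e = 0 := by rw [← h4]; abel
    have hk : k • e = (k % 4) • e := by
      conv_lhs => rw [← Int.emod_add_mul_ediv k 4, add_smul, mul_comm, mul_smul, h4']
      simp
    simp only [hk]
    have hlt := Int.emod_lt_of_pos k (show (0 : ℤ) < 4 by norm_num)
    have hge := Int.emod_nonneg k (show (4 : ℤ) ≠ 0 by norm_num)
    generalize k % 4 = m at hlt hge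
    interval_cases m
    · left; simp
    · right; left; simp
    · right; right; left; abel
    · right; right; right; abel
  refine ⟨{a | a - r a = 0 ∨ a - r a = e + e}, fun a => ?_⟩
  have hs : a + e - r (a + e) = (a - r a) + e := by rw [hr]; abel
  simp only [Set.mem_ofPred_eq, hs]
  have h3 : e + e + e ≠ 0 := by
    intro h
    have h' : e + e + e + e = 0 := by rw [← h4]; abel
    rw [h, zero_add] at h'
    exact h1 h'
  have h4' : e + e + e + e = 0 := by rw [← h4]; abel
  rcases hcases _ (hmem a) with h | h | h | h <;> rw [h] <;> simp [h1, h2, h3, h4']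

lemma two_mul_ncard_of_alternating {Q : Type*} [AddCommGroup Q] [Finite Q] {e : Q} {S : Set Q}
    (hS : ∀ a, a + e ∈ S ↔ a ∉ S) : 2 * S.ncard = Nat.card Q := by
  have hc : Sᶜ = (fun a => a + e) ⁻¹' S := by
    ext a
    simp [hS]
  have hcard : Sᶜ.ncard = S.ncard := by
    rw [hc]
    exact Set.ncard_preimage_of_injective_subset_range (add_left_injective e)
      (by rw [(add_right_surjective e).range_eq]; exact Set.subset_univ _)
  rw [← Set.ncard_add_ncard_compl S, hcard, two_mul]

/-- A `Z₄`-linear code of length `n`, size `4^{k₁}·2^{k₂}` and minimum Lee weight at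
least `d ≥ 3` yields a `(d−2)`-distance coloring of `V (2n−1)` with `2^{2n−1−2k₁−k₂}` colors. -/
theorem coloring_of_Z4_code_punctured (n k₁ k₂ d : ℕ) (hn : 1 ≤ n) (hd : 3 ≤ d)
    (C : AddSubgroup (Fin n → ZMod 4)) (hcard : Nat.card C = 4 ^ k₁ * 2 ^ k₂)
    (hLee : ∀ x ∈ C, x ≠ 0 → d ≤ leeWtVec x) :
    (∃ Γ : V (2 * n - 1) → Fin (2 ^ (2 * n - 1 - 2 * k₁ - k₂)),
        IsDistColoring (2 * n - 1) (d - 2) (2 ^ (2 * n - 1 - 2 * k₁ - k₂)) Γ) ∧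
      chi' (d - 2) (2 * n - 1) ≤ 2 ^ (2 * n - 1 - 2 * k₁ - k₂) := by
  suffices h : ∃ Γ : V (2 * n - 1) → Fin (2 ^ (2 * n - 1 - 2 * k₁ - k₂)),
      IsDistColoring (2 * n - 1) (d - 2) (2 ^ (2 * n - 1 - 2 * k₁ - k₂)) Γ from
    ⟨h, Nat.sInf_le h⟩
  let Q := (Fin n → ZMod 4) ⧸ C
  let e₀ : Fin n → ZMod 4 := Pi.single ⟨n - 1, by omega⟩ 1
  let e : Q := QuotientAddGroup.mk e₀
  have he2 : e₀ + e₀ = Pi.single ⟨n - 1, by omega⟩ 2 := by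
    rw [← Pi.single_add]; rfl
  have h1 : e ≠ 0 := by
    intro h
    have hw := hLee e₀ ((QuotientAddGroup.eq_zero_iff _).1 h)
      (by rw [Ne, Pi.single_eq_zero_iff]; decide)
    have : leeWtVec e₀ = 1 := leeWtVec_single _ _
    omega
  have h2 : e + e ≠ 0 := by
    intro h
    have hne : e₀ + e₀ ≠ 0 := by
      rw [he2, Ne, Pi.single_eq_zero_iff]; decide
    have hw := hLee (e₀ + e₀) ((QuotientAddGroup.eq_zero_iff _).1 h) hne
    have : leeWtVec (e₀ + e₀) = 2 := by rw [he2]; exact leeWtVec_single _ _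
    omega
  have h4 : e + e + (e + e) = 0 := by
    have : e₀ + e₀ + (e₀ + e₀) = 0 := by
      rw [he2, ← Pi.single_add, Pi.single_eq_zero_iff]; decide
    exact congrArg (QuotientAddGroup.mk : _ → Q) this
  obtain ⟨S, hS⟩ := exists_alternating_set e h1 h2 h4
  have hbit : ∀ x : V (2 * n - 1), ∃ b, (QuotientAddGroup.mk (grayInv x b) : Q) ∈ S := by
    intro x
    by_contra! hno
    rcases grayInv_one hn x with h | h
    · have := (hS (QuotientAddGroup.mk (grayInv x 0))).2 (hno 0)
      exact hno 1 (by rw [h]; exact this)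
    · have := (hS (QuotientAddGroup.mk (grayInv x 1))).2 (hno 1)
      exact hno 0 (by rw [h]; exact this)
  choose b hb using hbit
  have hScard : Nat.card S = 2 ^ (2 * n - 1 - 2 * k₁ - k₂) := by
    have hQ : Nat.card (Fin n → ZMod 4) = Nat.card Q * Nat.card C :=
      AddSubgroup.card_eq_card_quotient_mul_card_addSubgroup C
    have hpos : 0 < S.ncard := by
      have h := two_mul_ncard_of_alternating hS
      have : 0 < Nat.card Q := Nat.card_pos
      omega
    rw [← two_mul_ncard_of_alternating hS, hcard, Nat.card_fun, Nat.card_zmod, Nat.card_fin,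
      show (4 : ℕ) = 2 ^ 2 by norm_num, ← pow_mul, ← pow_mul] at hQ
    have hQ' : 2 ^ (2 * n) = S.ncard * 2 ^ (2 * k₁ + k₂ + 1) := by
      rw [hQ]; ring
    -- Positivity of `|S|` ensures that the exponent in the statement is not truncated.
    have hle : 2 * k₁ + k₂ + 1 ≤ 2 * n := by
      refine (Nat.pow_le_pow_iff_right (a := 2) (by norm_num)).1 ?_
      rw [hQ']
      exact Nat.le_mul_of_pos_left _ hpos
    rw [Nat.card_coe_set_eq]
    refine Nat.eq_of_mul_eq_mul_right (Nat.two_pow_pos (2 * k₁ + k₂ + 1)) ?_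
    rw [← hQ', ← pow_add]
    congr 1
    omega
  let φ : S ≃ Fin (2 ^ (2 * n - 1 - 2 * k₁ - k₂)) := Finite.equivFinOfCardEq hScard
  refine ⟨fun x => φ ⟨_, hb x⟩, fun u v huv hd' hcol => ?_⟩
  have hq : (QuotientAddGroup.mk (grayInv v (b v)) : Q) = QuotientAddGroup.mk (grayInv u (b u)) :=
    (congrArg Subtype.val (φ.injective hcol)).symm
  rw [QuotientAddGroup.eq, neg_add_eq_sub] at hq
  have hpos := hammingDist_pos.2 huv
  have hle := leeWtVec_grayInv_sub_le hn u v (b u) (b v)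
  have heq := leeWtVec_grayInv_sub hn u v (b u) (b v)
  by_cases h0 : grayInv u (b u) - grayInv v (b v) = 0
  · have : leeWtVec (0 : Fin n → ZMod 4) = 0 := by simp [leeWtVec, leeWt]
    rw [h0, this] at heq
    omega
  · have := hLee _ hq h0
    omega
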